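/- Let m ≥ 2, d ≥ 1, r ≥ 0 be integers with 2r ≤ d, and let W be a d×d complex matrix whose characteristic polynomial factors as X^{d−2r} · ∏_{k=1}^{r} (X² + λ_k²) with real numbers λ_k > 0. Let 𝒪_{m−1} be the (m−1)d × (m−1)d complex matrix which, as an (m−1)×(m−1) block matrix with d×d blocks, has diagonal blocks 2I, blocks −I − iW directly above the diagonal, blocks −I + iW directly below the diagonal, and zero blocks elsewhere. Then det 𝒪_{m−1} = m^{d−2r} · ∏_{k=1}^{r} ( ((1+λ_k)^m − (1−λ_k)^m)/(2λ_k) )². -/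

import Mathlib

open Complex

/-- The `(m−1)d × (m−1)d` block-tridiagonal matrix `𝒪_{m−1}` with diagonal
blocks `2I`, blocks `−I − iW` directly above the diagonal and `−I + iW`
directly below the diagonal. -/
noncomputable def calO (m d : ℕ) (W : Matrix (Fin d) (Fin d) ℂ) :
    Matrix (Fin (m - 1) × Fin d) (Fin (m - 1) × Fin d) ℂ :=
  fun p q =>
    if p.1 = q.1 then (if p.2 = q.2 then 2 else 0)
    else if (p.1 : ℕ) + 1 = (q.1 : ℕ) then
      -(if p.2 = q.2 then 1 else 0) - Complex.I * W p.2 q.2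
    else if (q.1 : ℕ) + 1 = (p.1 : ℕ) then
      -(if p.2 = q.2 then 1 else 0) + Complex.I * W p.2 q.2
    else 0

/-!
Write `x = 1 + iW` and `y = 1 - iW`. These commute, and `𝒪_{m-1}` is the block tridiagonal Toeplitz
matrix with diagonal `x + y`, superdiagonal `-x` and subdiagonal `-y`. Over a commutative ring the
`n × n` matrix of this shape has determinant `x ^ n + x ^ (n - 1) * y + ⋯ + y ^ n`. As determinants
of matrices with commuting blocks may be taken in two steps, `det 𝒪_{m-1}` is the determinant of a
polynomial in `W`, that is, the product of the values of this polynomial at the eigenvalues of `W`.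
-/

open Polynomial

section TridiagonalToeplitz

variable {R : Type*}

/-- The `n × n` tridiagonal Toeplitz matrix with `a` on the diagonal, `b` directly above it and
`c` directly below it. No multiplication is required of `R`, so the entries may themselves be
matrices, which gives block tridiagonal matrices. -/
def tridiagonalToeplitz [Zero R] (a b c : R) (n : ℕ) : Matrix (Fin n) (Fin n) R :=
  Matrix.of fun i j =>
    if i = j then a else if (i : ℕ) + 1 = j then b else if (j : ℕ) + 1 = i then c else 0

theorem tridiagonalToeplitz_map {S F : Type*} [Zero R] [Zero S] [FunLike F R S]
    [ZeroHomClass F R S] (f : F) (a b c : R) (n : ℕ) :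
    (tridiagonalToeplitz a b c n).map f = tridiagonalToeplitz (f a) (f b) (f c) n := by
  ext i j
  simp [tridiagonalToeplitz, apply_ite f]

theorem tridiagonalToeplitz_submatrix_succ [Zero R] (a b c : R) (n : ℕ) :
    (tridiagonalToeplitz a b c (n + 1)).submatrix Fin.succ Fin.succ =
      tridiagonalToeplitz a b c n := by
  ext i j
  simp [tridiagonalToeplitz]

variable [CommRing R]

theorem det_tridiagonalToeplitz_submatrix_succAbove_one (a b c : R) (n : ℕ) :
    ((tridiagonalToeplitz a b c (n + 2)).submatrix Fin.succ (Fin.succAbove 1)).det =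
      c * (tridiagonalToeplitz a b c n).det := by
  have hminor : ((tridiagonalToeplitz a b c (n + 2)).submatrix Fin.succ (Fin.succAbove 1)).submatrix
      Fin.succ Fin.succ = tridiagonalToeplitz a b c n := by
    simp only [← tridiagonalToeplitz_submatrix_succ a b c n,
      ← tridiagonalToeplitz_submatrix_succ a b c (n + 1), Matrix.submatrix_submatrix]
    congr 1
  rw [Matrix.det_succ_column_zero, Fin.sum_univ_succ, Fin.succAbove_zero, hminor,
    Finset.sum_eq_zero fun i _ => by simp [tridiagonalToeplitz, Fin.ext_iff]]
  simp [tridiagonalToeplitz]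

theorem det_tridiagonalToeplitz_add_two (a b c : R) (n : ℕ) :
    (tridiagonalToeplitz a b c (n + 2)).det =
      a * (tridiagonalToeplitz a b c (n + 1)).det - b * c * (tridiagonalToeplitz a b c n).det := by
  rw [Matrix.det_succ_row_zero, Fin.sum_univ_succ, Fin.sum_univ_succ, Fin.succAbove_zero,
    Fin.succ_zero_eq_one, tridiagonalToeplitz_submatrix_succ,
    det_tridiagonalToeplitz_submatrix_succAbove_one,
    Finset.sum_eq_zero fun i _ => by simp [tridiagonalToeplitz, Fin.ext_iff]]
  simp [tridiagonalToeplitz, sub_eq_add_neg, mul_assoc]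

theorem det_tridiagonalToeplitz_add_neg_neg (x y : R) (n : ℕ) :
    (tridiagonalToeplitz (x + y) (-x) (-y) n).det =
      ∑ i ∈ Finset.range (n + 1), x ^ i * y ^ (n - i) := by
  induction n using Nat.twoStepInduction with
  | zero => simp
  | one => simp [tridiagonalToeplitz, Finset.sum_range_succ, add_comm]
  | more n ih₀ ih₁ =>
    have hsum (k : ℕ) : ∑ i ∈ Finset.range (k + 1 + 1), x ^ i * y ^ (k + 1 - i) =
        x ^ (k + 1) + y * ∑ i ∈ Finset.range (k + 1), x ^ i * y ^ (k - i) :=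
      geom_sum₂_succ_eq x y
    rw [det_tridiagonalToeplitz_add_two, ih₀, ih₁, hsum (n + 1), hsum n]
    ring

end TridiagonalToeplitz

section AevalDet

variable {R n : Type*} [CommRing R] [Fintype n] [DecidableEq n]

theorem card_eq_of_charpoly_eq_prod [Nontrivial R] {A : Matrix n n R} {s : Multiset R}
    (hA : A.charpoly = (s.map fun a => X - C a).prod) : Fintype.card n = s.card := by
  rw [← A.charpoly_natDegree_eq_dim, hA, natDegree_multiset_prod_X_sub_C_eq_card]

theorem det_aeval_X_add_C_of_charpoly_eq_prod {A : Matrix n n R} {s : Multiset R}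
    (hA : A.charpoly = (s.map fun a => X - C a).prod) (b : R) :
    (aeval A (X + C b)).det = (s.map fun a => a + b).prod := by
  nontriviality R
  calc (aeval A (X + C b)).det = (-(Matrix.scalar n (-b) - A)).det := by
        simp only [map_add, aeval_X, aeval_C, map_neg, neg_sub, sub_neg_eq_add]
        rfl
    _ = (-1) ^ s.card * (s.map fun a => -b - a).prod := by
        rw [Matrix.det_neg, ← Matrix.eval_charpoly, hA, eval_multiset_prod,
          card_eq_of_charpoly_eq_prod hA, Multiset.map_map]
        simp
    _ = (s.map fun a => a + b).prod := by
        rw [← Multiset.card_map (fun a => -b - a) s, ← Multiset.prod_map_neg, Multiset.map_map]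
        simp [add_comm]

theorem det_aeval_of_charpoly_eq_prod {A : Matrix n n R} {s : Multiset R}
    (hA : A.charpoly = (s.map fun a => X - C a).prod) {p : R[X]} (hp : p.Splits) :
    (aeval A p).det = (s.map fun a => p.eval a).prod := by
  nontriviality R
  induction hp using Submonoid.closure_induction with
  | mem p hp =>
    obtain ⟨b, rfl⟩ | ⟨b, rfl⟩ := hp
    · simp [Matrix.algebraMap_eq_diagonal, card_eq_of_charpoly_eq_prod hA]
    · simpa using det_aeval_X_add_C_of_charpoly_eq_prod hA b
  | one => simp
  | mul p q _ _ ihp ihq => simp [Matrix.det_mul, ihp, ihq]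

end AevalDet

theorem calO_eq_comp_tridiagonalToeplitz (m d : ℕ) (W : Matrix (Fin d) (Fin d) ℂ) :
    calO m d W = Matrix.comp _ _ _ _ ℂ
      (tridiagonalToeplitz ((1 + I • W) + (1 - I • W)) (-(1 + I • W)) (-(1 - I • W)) (m - 1)) := by
  ext ⟨p, i⟩ ⟨q, j⟩
  simp only [calO, tridiagonalToeplitz, Matrix.comp_apply, Matrix.of_apply,
    apply_ite fun M : Matrix (Fin d) (Fin d) ℂ => M i j, Matrix.add_apply, Matrix.sub_apply,
    Matrix.neg_apply, Matrix.smul_apply, Matrix.one_apply, Matrix.zero_apply, smul_eq_mul]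
  split_ifs <;> ring

theorem det_calO_of_charpoly_eq_prod {m d : ℕ} (hm : m ≠ 0) {W : Matrix (Fin d) (Fin d) ℂ}
    {s : Multiset ℂ} (hW : W.charpoly = (s.map fun a => X - C a).prod) :
    (calO m d W).det =
      (s.map fun a =>
        ∑ i ∈ Finset.range m, (1 + I * a) ^ i * (1 - I * a) ^ (m - 1 - i)).prod := by
  set x : ℂ[X] := 1 + C I * X
  set y : ℂ[X] := 1 - C I * X
  have hx : aeval W x = 1 + I • W := by simp [x, Algebra.smul_def]
  have hy : aeval W y = 1 - I • W := by simp [y, Algebra.smul_def]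
  calc (calO m d W).det
      = (Matrix.comp _ _ _ _ ℂ
          ((tridiagonalToeplitz (x + y) (-x) (-y) (m - 1)).map (aeval W))).det := by
        rw [calO_eq_comp_tridiagonalToeplitz, tridiagonalToeplitz_map]
        simp only [map_add, map_neg, hx, hy]
    _ = (aeval W (tridiagonalToeplitz (x + y) (-x) (-y) (m - 1)).det).det :=
        (Matrix.det_det _ (aeval W : ℂ[X] →ₐ[ℂ] Matrix (Fin d) (Fin d) ℂ).toRingHom).symm
    _ = (aeval W (∑ i ∈ Finset.range m, x ^ i * y ^ (m - 1 - i))).det := by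
        rw [det_tridiagonalToeplitz_add_neg_neg, Nat.sub_one_add_one hm]
    _ = _ := by
        rw [det_aeval_of_charpoly_eq_prod hW (IsAlgClosed.splits _)]
        simp [x, y, eval_finsetSum]

theorem geom_sum₂_one_add_one_sub {K : Type*} [Field K] [NeZero (2 : K)] {z : K} (hz : z ≠ 0)
    (m : ℕ) :
    ∑ i ∈ Finset.range m, (1 + z) ^ i * (1 - z) ^ (m - 1 - i) =
      ((1 + z) ^ m - (1 - z) ^ m) / (2 * z) := by
  have hsub : (1 + z) - (1 - z) = 2 * z := by ring
  have hne : 1 + z ≠ 1 - z := by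
    rw [← sub_ne_zero, hsub]
    exact mul_ne_zero two_ne_zero hz
  rw [(Commute.all _ _).geom_sum₂ hne, hsub]

section SkewSpectrum

variable {ι : Type*} [Fintype ι]

/-- The eigenvalues, with multiplicities, of a matrix of skew-adjoint type: `0` with multiplicity
`e`, and the pairs `±iλ_k`. The `λ_k` are complex, not necessarily real. -/
noncomputable def skewSpectrum (e : ℕ) (lam : ι → ℂ) : Multiset ℂ :=
  Multiset.replicate e 0 +
    (Finset.univ.val.map (fun k => I * lam k) + Finset.univ.val.map (fun k => -(I * lam k)))

theorem prod_map_skewSpectrum {M : Type*} [CommMonoid M] (e : ℕ) (lam : ι → ℂ) (f : ℂ → M) :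
    ((skewSpectrum e lam).map f).prod = f 0 ^ e * ∏ k, f (I * lam k) * f (-(I * lam k)) := by
  simp [skewSpectrum, Finset.prod_mul_distrib]

theorem X_sub_C_I_mul_mul_X_sub_C_neg_I_mul (z : ℂ) :
    (X - C (I * z)) * (X - C (-(I * z))) = X ^ 2 + C (z ^ 2) := by
  have hz : z ^ 2 = -(I * z) ^ 2 := by simp [mul_pow]
  rw [hz]
  simp only [map_neg, map_pow]
  ring

theorem prod_X_sub_C_skewSpectrum (e : ℕ) (lam : ι → ℂ) :
    ((skewSpectrum e lam).map fun a => X - C a).prod =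
      X ^ e * ∏ k, (X ^ 2 + C (lam k ^ 2)) := by
  simp only [prod_map_skewSpectrum, X_sub_C_I_mul_mul_X_sub_C_neg_I_mul, C_0, sub_zero]

theorem det_calO_eigenvalues_general {m d e : ℕ} (hm : m ≠ 0)
    {W : Matrix (Fin d) (Fin d) ℂ} {lam : ι → ℂ} (hlam : ∀ k, lam k ≠ 0)
    (hchar : W.charpoly = X ^ e * ∏ k, (X ^ 2 + C (lam k ^ 2))) :
    (calO m d W).det =
      (m : ℂ) ^ e * ∏ k, (((1 + lam k) ^ m - (1 - lam k) ^ m) / (2 * lam k)) ^ 2 := by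
  have hI (z : ℂ) : I * (I * z) = -z := by rw [← mul_assoc, I_mul_I, neg_one_mul]
  rw [det_calO_of_charpoly_eq_prod hm (hchar.trans (prod_X_sub_C_skewSpectrum e lam).symm),
    prod_map_skewSpectrum]
  congr 1
  · simp
  · refine Finset.prod_congr rfl fun k _ => ?_
    simp only [mul_neg, hI, neg_neg, sub_neg_eq_add, ← sub_eq_add_neg]
    rw [geom_sum₂_comm (1 - lam k), geom_sum₂_one_add_one_sub (hlam k), sq]

end SkewSpectrum

/-- **Proposition B.3.** If the characteristic polynomial of `W` factors as
`X^{d−2r} ∏_{k=1}^r (X² + λ_k²)` with `λ_k > 0` real (i.e. the eigenvalues of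
`W` are `±iλ_k` together with `0` of multiplicity `d − 2r`), then
`det 𝒪_{m−1} = m^{d−2r} ∏_{k=1}^r (((1+λ_k)^m − (1−λ_k)^m)/(2λ_k))²`. -/
theorem det_calO_eigenvalues (m d r : ℕ) (hm : 2 ≤ m) (hd : 1 ≤ d)
    (hr : 2 * r ≤ d) (W : Matrix (Fin d) (Fin d) ℂ)
    (lam : Fin r → ℝ) (hlam : ∀ k, 0 < lam k)
    (hchar : W.charpoly =
      Polynomial.X ^ (d - 2 * r) *
        ∏ k : Fin r, (Polynomial.X ^ 2 + Polynomial.C ((lam k : ℂ) ^ 2))) :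
    (calO m d W).det =
      (m : ℂ) ^ (d - 2 * r) *
        ∏ k : Fin r,
          ((((1 + (lam k : ℂ)) ^ m - (1 - (lam k : ℂ)) ^ m) /
              (2 * (lam k : ℂ))) ^ 2) := by
  exact det_calO_eigenvalues_general (by lia) (fun k => ofReal_ne_zero.mpr (hlam k).ne') hchar
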